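/- There is an absolute constant C > 0 such that for all integers k ≥ m ≥ 2, δ(m,k) ≤ (log 2m)^{Cm} / ((k/m) · log log(3k/m))^{m−1}. -/

import Mathlib

open Filter Real

/-- A `k`-tuple of integers is admissible if for every prime `p` its entries
do not cover all residue classes mod `p`. -/
def AdmissibleTuple {k : ℕ} (x : Fin k → ℤ) : Prop :=
  ∀ p : ℕ, p.Prime → ∃ r : ZMod p, ∀ i, (x i : ZMod p) ≠ r

/-- An `(m,k)`-plausible set: translation invariant, permutation invariant, and
every admissible `k`-tuple of distinct integers contains an `m`-subtuple lying in `A`. -/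
def Plausible (m k : ℕ) (A : Set (Fin m → ℤ)) : Prop :=
  (∀ h ∈ A, ∀ t : ℤ, (fun i => h i + t) ∈ A) ∧
  (∀ h ∈ A, ∀ σ : Equiv.Perm (Fin m), (h ∘ σ) ∈ A) ∧
  (∀ x : Fin k → ℤ, Function.Injective x → AdmissibleTuple x →
    ∃ f : Fin m → Fin k, Function.Injective f ∧ (x ∘ f) ∈ A)

/-- The number of points of `A` in the box `[-N, N]^m`. -/
noncomputable def boxCount (m : ℕ) (A : Set (Fin m → ℤ)) (N : ℕ) : ℕ :=
  Nat.card {h : Fin m → ℤ // h ∈ A ∧ ∀ i, |h i| ≤ (N : ℤ)}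

/-- The liminf density of `A ⊆ ℤ^m` in boxes `[-N, N]^m`. -/
noncomputable def lowerBoxDensity (m : ℕ) (A : Set (Fin m → ℤ)) : ℝ :=
  Filter.liminf (fun N : ℕ => (boxCount m A N : ℝ) / (2 * N) ^ m) Filter.atTop

/-- `δ(m,k)`: the infimum over `(m,k)`-plausible sets `A` of the liminf density of `A`. -/
noncomputable def delta (m k : ℕ) : ℝ :=
  sInf { d : ℝ | ∃ A : Set (Fin m → ℤ), Plausible m k A ∧ d = lowerBoxDensity m A }

/-!
By the Chinese remainder theorem every admissible tuple has a translate coprime to a given modulus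
`q`, so it meets at most `φ(q)` residue classes mod `q`. If `φ(q) (m - 1) < k`, then by
pigeonhole the `m`-tuples with all entries congruent mod `q` form an `(m, k)`-plausible set, whose
density is `q ^ (1 - m)`. It remains to make `q` large while `φ(q) ≤ k / m`. For a primorial
`P ≤ k / m` the Euler product and the harmonic sum give `P / φ(P) ≫ log log (3 k / m)`, and
`q = r P` with `r = ⌊(k / m) / φ(P)⌋` gains this factor over `k / m`.
-/

open scoped Finset

lemma totient_mul_le_mul_totient (a b : ℕ) : (a * b).totient ≤ a * b.totient := by
  induction a using induction_on_primes with
  | zero => simp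
  | one => simp
  | prime_mul p n hp ih =>
    calc (p * n * b).totient ≤ p * (n * b).totient := by
          rw [mul_assoc]
          by_cases hpn : p ∣ n * b
          · rw [Nat.totient_mul_of_prime_of_dvd hp hpn]
          · rw [Nat.totient_mul_of_prime_of_not_dvd hp hpn]
            gcongr
            exact p.sub_le 1
      _ ≤ p * n * b.totient := by
          rw [mul_assoc]
          gcongr

lemma log_add_one_le_prod_primesLE (n : ℕ) :
    Real.log (n + 1) ≤ ∏ p ∈ n.primesLE, (1 - (p : ℝ)⁻¹)⁻¹ := by
  let f : ℕ →* ℝ := (invMonoidHom : ℝ →* ℝ).comp (Nat.castRingHom ℝ)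
  have hf {p : ℕ} (hp : p.Prime) : ‖f p‖ < 1 := by
    simpa [f] using inv_lt_one_of_one_lt₀ (Nat.one_lt_cast.2 hp.one_lt)
  have euler : HasSum (fun d : (n + 1).smoothNumbers => (d : ℝ)⁻¹)
      (∏ p ∈ n.primesLE, (1 - (p : ℝ)⁻¹)⁻¹) :=
    (EulerProduct.summable_and_hasSum_smoothNumbers_prod_primesBelow_geometric hf (n + 1)).2
  have smooth : ∀ d ∈ Finset.Icc 1 n, d ∈ (n + 1).smoothNumbers := fun d hd =>
    Nat.mem_smoothNumbers_of_lt (Finset.mem_Icc.1 hd).1 (by grind)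
  calc Real.log (n + 1) ≤ ∑ d ∈ Finset.Icc 1 n, (d : ℝ)⁻¹ := by
        simpa [harmonic_eq_sum_Icc] using log_add_one_le_harmonic n
    _ = ∑ d ∈ (Finset.Icc 1 n).subtype (· ∈ (n + 1).smoothNumbers), (d : ℝ)⁻¹ :=
        (Finset.sum_subtype_of_mem (fun d : ℕ => (d : ℝ)⁻¹) smooth).symm
    _ ≤ ∏ p ∈ n.primesLE, (1 - (p : ℝ)⁻¹)⁻¹ :=
        sum_le_hasSum _ (fun _ _ => by positivity) euler

lemma log_mul_totient_primorial_le (n : ℕ) :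
    Real.log (n + 1) * (primorial n).totient ≤ primorial n := by
  have totient_eq : ((primorial n).totient : ℝ) =
      primorial n * ∏ p ∈ n.primesLE, (1 - (p : ℝ)⁻¹) := by
    have h := Nat.totient_eq_mul_prod_factors (primorial n)
    rw [primeFactors_primorial] at h
    simpa using congrArg (Rat.cast : ℚ → ℝ) h
  have prod_pos : 0 < ∏ p ∈ n.primesLE, (1 - (p : ℝ)⁻¹) := Finset.prod_pos fun p hp =>
    sub_pos.2 (inv_lt_one_of_one_lt₀ (Nat.one_lt_cast.2 (Nat.one_lt_of_mem_primesLE hp)))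
  have hlog := log_add_one_le_prod_primesLE n
  rw [Finset.prod_inv_distrib] at hlog
  calc Real.log (n + 1) * (primorial n).totient
      ≤ (∏ p ∈ n.primesLE, (1 - (p : ℝ)⁻¹))⁻¹ * (primorial n).totient := by gcongr
    _ = primorial n := by
        rw [totient_eq, mul_comm, mul_assoc, mul_inv_cancel₀ prod_pos.ne', mul_one]

section LogLog

variable {x : ℝ}

lemma log_log_three_mul_pos (hx : 1 ≤ x) : 0 < Real.log (Real.log (3 * x)) := by
  refine Real.log_pos ((Real.lt_log_iff_exp_lt (by positivity)).2 ?_)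
  linarith [Real.exp_one_lt_d9]

lemma log_log_three_mul_le {n : ℕ} (hx : 1 ≤ x) (hxn : x ≤ 4 ^ (n + 1)) :
    Real.log (Real.log (3 * x)) ≤ 2 + Real.log (n + 1) := by
  have log_four : Real.log 4 ≤ 2 := by
    rw [show (4 : ℝ) = 2 ^ 2 by norm_num, Real.log_pow, Nat.cast_ofNat]
    linarith [Real.log_two_lt_d9]
  have log_pos : 0 < Real.log (3 * x) := Real.log_pos (by linarith)
  have log_le : Real.log (3 * x) ≤ 4 * (n + 1) :=
    calc Real.log (3 * x) ≤ Real.log (4 ^ (n + 2)) := by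
          gcongr
          linarith [pow_succ (4 : ℝ) (n + 1)]
      _ = (n + 2) * Real.log 4 := by simp [Real.log_pow]
      _ ≤ (n + 2) * 2 := by gcongr
      _ ≤ 4 * (n + 1) := by linarith [n.cast_nonneg (α := ℝ)]
  calc Real.log (Real.log (3 * x)) ≤ Real.log (4 * (n + 1)) := by gcongr
    _ = Real.log 4 + Real.log (n + 1) := Real.log_mul (by norm_num) (by positivity)
    _ ≤ 2 + Real.log (n + 1) := by gcongr

end LogLog

lemma exists_natCast_zmod_eq {s : Finset ℕ} (hs₀ : ∀ n ∈ s, n ≠ 0)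
    (hs : (s : Set ℕ).Pairwise Nat.Coprime) (r : ∀ n, ZMod n) :
    ∃ c : ℕ, ∀ n ∈ s, (c : ZMod n) = r n := by
  let c := Nat.chineseRemainderOfFinset (fun n => (r n).val) id s hs₀ hs
  refine ⟨c, fun n hn => ?_⟩
  have : NeZero n := ⟨hs₀ n hn⟩
  rw [(ZMod.natCast_eq_natCast_iff _ _ _).2 (c.2 n hn), ZMod.natCast_zmod_val]

lemma AdmissibleTuple.exists_isUnit_sub {k q : ℕ} {x : Fin k → ℤ} (hx : AdmissibleTuple x)
    (hq : q ≠ 0) : ∃ c : ℕ, ∀ i, IsUnit ((x i - c : ℤ) : ZMod q) := by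
  choose! r hr using hx
  obtain ⟨c, hc⟩ := exists_natCast_zmod_eq (s := q.primeFactors)
    (fun p hp => (Nat.prime_of_mem_primeFactors hp).ne_zero)
    (fun p hp p' hp' => (Nat.coprime_primes (Nat.prime_of_mem_primeFactors hp)
      (Nat.prime_of_mem_primeFactors hp')).2) r
  refine ⟨c, fun i => ?_⟩
  rw [ZMod.coe_int_isUnit_iff_isCoprime, Int.isCoprime_iff_nat_coprime]
  by_contra not_coprime
  obtain ⟨p, hp, hpq, hpx⟩ := Nat.Prime.not_coprime_iff_dvd.1 not_coprime
  have hxc : (x i : ZMod p) = c := by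
    rw [← sub_eq_zero]
    exact_mod_cast (ZMod.intCast_zmod_eq_zero_iff_dvd (x i - c) p).2 (Int.natCast_dvd.2 hpx)
  exact hr p hp i (hxc.trans (hc p (Nat.mem_primeFactors.2 ⟨hp, hpq, hq⟩)))

/-- The integer `m`-tuples all of whose entries are congruent modulo `q`. -/
def congruentTuples (m q : ℕ) : Set (Fin m → ℤ) :=
  {h | ∀ i j, h i ≡ h j [ZMOD q]}

lemma plausible_congruentTuples {m k q : ℕ} (hq : q ≠ 0) (hk : q.totient * (m - 1) < k) :
    Plausible m k (congruentTuples m q) := by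
  refine ⟨fun h hh t i j => (hh i j).add_right t, fun h hh σ i j => hh _ _, fun x _ hx => ?_⟩
  have : NeZero q := ⟨hq⟩
  obtain ⟨c, hc⟩ := hx.exists_isUnit_sub hq
  obtain ⟨u, hu⟩ : ∃ u, m - 1 < #{i | (hc i).unit = u} :=
    Fintype.exists_lt_card_fiber_of_mul_lt_card _
      (by rwa [ZMod.card_units_eq_totient, Fintype.card_fin])
  let f := Finset.orderEmbOfCardLe {i | (hc i).unit = u} (Nat.le_of_pred_lt hu)
  have hf (i : Fin m) : ((x (f i) - c : ℤ) : ZMod q) = u :=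
    congrArg Units.val ((Finset.mem_filter_univ (f i)).1 (Finset.orderEmbOfCardLe_mem _ _ i))
  refine ⟨f, f.injective, fun i j => ?_⟩
  have := (ZMod.intCast_eq_intCast_iff _ _ q).1 ((hf i).trans (hf j).symm)
  exact Int.ModEq.add_right_cancel' (-(c : ℤ)) this

lemma card_Ioc_filter_modEq_le {a b r : ℤ} (hab : a ≤ b) (hr : 0 < r) (v : ℤ) :
    (#{x ∈ Finset.Ioc a b | x ≡ v [ZMOD r]} : ℝ) ≤ (b - a) / r + 1 := by
  have hr' : (0 : ℚ) < r := Int.cast_pos.2 hr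
  have hab' : (0 : ℚ) ≤ (b - a) / r + 1 := by
    have : (a : ℚ) ≤ b := Int.cast_le.2 hab
    have := div_nonneg (sub_nonneg.2 this) hr'.le
    positivity
  have card_le : (#{x ∈ Finset.Ioc a b | x ≡ v [ZMOD r]} : ℚ) ≤ (b - a) / r + 1 := by
    rw [← Int.cast_natCast, Int.Ioc_filter_modEq_card a b hr v, Int.cast_max, Int.cast_zero]
    refine max_le ?_ hab'
    have floor_le := Int.floor_le ((b - v) / (r : ℚ))
    have lt_floor := Int.lt_floor_add_one ((a - v) / (r : ℚ))
    have : (b - v) / (r : ℚ) - (a - v) / r = (b - a) / r := by ring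
    push_cast
    linarith
  exact_mod_cast card_le

lemma boxCount_congruentTuples_le {m q : ℕ} (hm : 0 < m) (hq : 0 < q) (N : ℕ) :
    (boxCount m (congruentTuples m q) N : ℝ) ≤ q * ((2 * N + 1) / q + 1) ^ m := by
  let progression (a : ℕ) : Finset ℤ := {x ∈ Finset.Ioc (-N - 1 : ℤ) N | x ≡ a [ZMOD q]}
  have card_progression (a : ℕ) : (#(progression a) : ℝ) ≤ (2 * N + 1) / q + 1 := by
    refine (card_Ioc_filter_modEq_le (by lia) (by lia) _).trans_eq ?_
    push_cast
    ring
  have subset : {h | h ∈ congruentTuples m q ∧ ∀ i, |h i| ≤ (N : ℤ)} ⊆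
      (Finset.range q).biUnion fun a => Fintype.piFinset fun _ : Fin m => progression a := by
    rintro h ⟨hh, hN⟩
    obtain ⟨a, ha, hmod⟩ := Int.existsUnique_equiv_nat (h ⟨0, hm⟩) (Int.natCast_pos.2 hq)
    simp only [Finset.coe_biUnion, Set.mem_iUnion, Finset.mem_coe, Finset.mem_range,
      Fintype.mem_piFinset]
    refine ⟨a, Int.ofNat_lt.1 ha, fun i =>
      Finset.mem_filter.2 ⟨Finset.mem_Ioc.2 ?_, (hh i _).trans hmod.symm⟩⟩
    have := abs_le.1 (hN i)
    lia
  calc (boxCount m (congruentTuples m q) N : ℝ)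
      ≤ #((Finset.range q).biUnion fun a => Fintype.piFinset fun _ : Fin m => progression a) := by
        rw [boxCount, ← Set.ncard_coe_finset]
        exact_mod_cast Set.ncard_le_ncard subset (Finset.finite_toSet _)
    _ ≤ ∑ a ∈ Finset.range q, (#(progression a) : ℝ) ^ m := by
        refine (Nat.cast_le.2 Finset.card_biUnion_le).trans_eq ?_
        simp only [Fintype.card_piFinset_const, Nat.cast_sum, Nat.cast_pow]
    _ ≤ ∑ _a ∈ Finset.range q, ((2 * N + 1) / q + 1 : ℝ) ^ m := by
        gcongr with a
        exact card_progression a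
    _ = q * ((2 * N + 1) / q + 1) ^ m := by simp

lemma lowerBoxDensity_congruentTuples_le {m q : ℕ} (hm : 0 < m) (hq : 0 < q) :
    lowerBoxDensity m (congruentTuples m q) ≤ (1 / q : ℝ) ^ (m - 1) := by
  have lim : Tendsto (fun N : ℕ => (q : ℝ) * (1 / q + 1 / N) ^ m) atTop
      (nhds ((1 / q : ℝ) ^ (m - 1))) := by
    have h := ((tendsto_one_div_atTop_nhds_zero_nat (𝕜 := ℝ)).const_add (1 / q : ℝ)).pow m
      |>.const_mul (q : ℝ)
    rwa [add_zero, ← mul_pow_sub_one hm.ne', ← mul_assoc, mul_one_div_cancel (by positivity),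
      one_mul] at h
  have density_le : ∀ᶠ N : ℕ in atTop, (boxCount m (congruentTuples m q) N : ℝ) / (2 * N) ^ m ≤
      q * (1 / q + 1 / N) ^ m := by
    filter_upwards [eventually_gt_atTop 0] with N hN
    have one_div_le : 1 / (q : ℝ) ≤ 1 := by
      rw [div_le_one (by positivity)]
      exact_mod_cast hq
    rw [div_le_iff₀ (by positivity), mul_assoc, ← mul_pow]
    refine (boxCount_congruentTuples_le hm hq N).trans ?_
    gcongr
    calc (2 * N + 1) / (q : ℝ) + 1 = 2 * N / q + 1 / q + 1 := by rw [add_div]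
      _ ≤ 2 * N / q + 1 + 1 := by gcongr
      _ = (1 / q + 1 / N) * (2 * N) := by field_simp; ring
  rw [← lim.liminf_eq]
  exact liminf_le_liminf density_le (isBoundedUnder_of ⟨0, fun N => by positivity⟩)
    lim.isCoboundedUnder_ge

lemma lowerBoxDensity_nonneg (m : ℕ) (A : Set (Fin m → ℤ)) : 0 ≤ lowerBoxDensity m A := by
  rw [lowerBoxDensity, liminf_eq]
  exact Real.sSup_nonneg' ⟨0, Eventually.of_forall fun N => by positivity, le_rfl⟩

lemma delta_le_of_plausible {m k : ℕ} {A : Set (Fin m → ℤ)} (hA : Plausible m k A) :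
    delta m k ≤ lowerBoxDensity m A := by
  refine csInf_le ⟨0, ?_⟩ ⟨A, hA, rfl⟩
  rintro _ ⟨B, -, rfl⟩
  exact lowerBoxDensity_nonneg m B

lemma delta_le_of_totient_lt {m k q : ℕ} (hm : 0 < m) (hq : 0 < q)
    (hk : q.totient * (m - 1) < k) : delta m k ≤ (1 / q : ℝ) ^ (m - 1) :=
  (delta_le_of_plausible (plausible_congruentTuples hq.ne' hk)).trans
    (lowerBoxDensity_congruentTuples_le hm hq)

lemma exists_totient_mul_log_log_le {x : ℝ} (hx : 1 ≤ x) :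
    ∃ P : ℕ, 0 < P ∧ P ≤ x ∧ P.totient * Real.log (Real.log (3 * x)) ≤ 3 * P := by
  obtain ⟨n, hn, hn'⟩ := exists_nat_pow_near hx (by norm_num : (1 : ℝ) < 4)
  have hP : (primorial n : ℝ) ≤ 4 ^ n := by exact_mod_cast primorial_le_four_pow n
  refine ⟨primorial n, primorial_pos n, hP.trans hn, ?_⟩
  have totient_le : ((primorial n).totient : ℝ) ≤ primorial n := Nat.cast_le.2 (Nat.totient_le _)
  calc (primorial n).totient * Real.log (Real.log (3 * x))
      ≤ (primorial n).totient * (2 + Real.log (n + 1)) := by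
        gcongr
        exact log_log_three_mul_le hx hn'.le
    _ ≤ 3 * primorial n := by linarith [log_mul_totient_primorial_le n]

lemma exists_totient_le_and_mul_log_log_le {x : ℝ} (hx : 1 ≤ x) :
    ∃ q : ℕ, 0 < q ∧ q.totient ≤ x ∧ x * Real.log (Real.log (3 * x)) ≤ 6 * q := by
  obtain ⟨P, hP, hPx, hlog⟩ := exists_totient_mul_log_log_le hx
  have totient_pos : 0 < (P.totient : ℝ) := Nat.cast_pos.2 (Nat.totient_pos.2 hP)
  have totient_le : (P.totient : ℝ) ≤ x := (Nat.cast_le.2 P.totient_le).trans hPx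
  let r := ⌊x / P.totient⌋₊
  have hr : 1 ≤ r := Nat.one_le_floor_iff _ |>.2 ((one_le_div totient_pos).2 totient_le)
  have hr_le : r * P.totient ≤ x :=
    (le_div_iff₀ totient_pos).1 (Nat.floor_le (by positivity))
  have le_hr : x ≤ 2 * r * P.totient := by
    refine (div_le_iff₀ totient_pos).1 ((Nat.lt_floor_add_one _).le.trans ?_)
    have : (1 : ℝ) ≤ r := Nat.one_le_cast.2 hr
    linarith
  refine ⟨r * P, by positivity, ?_, ?_⟩
  · calc ((r * P).totient : ℝ) ≤ r * P.totient := by exact_mod_cast totient_mul_le_mul_totient r P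
      _ ≤ x := hr_le
  · calc x * Real.log (Real.log (3 * x))
        ≤ 2 * r * P.totient * Real.log (Real.log (3 * x)) := by
          gcongr
          exact (log_log_three_mul_pos hx).le
      _ ≤ 2 * r * (3 * P) := by
          rw [mul_assoc]
          gcongr
      _ = 6 * (r * P : ℕ) := by push_cast; ring

lemma six_pow_le_log_rpow {m : ℕ} (hm : 2 ≤ m) :
    (6 : ℝ) ^ (m - 1) ≤ Real.log (2 * m) ^ ((10 : ℝ) * m) := by
  have hm' : (2 : ℝ) ≤ m := Nat.ofNat_le_cast.2 hm
  have le_log : (1.25 : ℝ) ≤ Real.log (2 * m) :=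
    calc (1.25 : ℝ) ≤ 2 * Real.log 2 := by linarith [Real.log_two_gt_d9]
      _ = Real.log (2 * 2) := by rw [Real.log_mul two_ne_zero two_ne_zero, two_mul]
      _ ≤ Real.log (2 * m) := by gcongr
  calc (6 : ℝ) ^ (m - 1) ≤ 6 ^ m := pow_le_pow_right₀ (by norm_num) (m.sub_le 1)
    _ ≤ ((1.25 : ℝ) ^ 10) ^ m := by gcongr; norm_num
    _ ≤ (Real.log (2 * m) ^ 10) ^ m := by gcongr
    _ = Real.log (2 * m) ^ ((10 : ℝ) * m) := by
        rw [← pow_mul, ← Real.rpow_natCast]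
        push_cast
        rfl

lemma div_mul_log_log_pos {m k : ℕ} (hm : 0 < m) (hmk : m ≤ k) :
    0 < (k / m : ℝ) * Real.log (Real.log (3 * k / m)) := by
  have hx : (1 : ℝ) ≤ k / m := (one_le_div (Nat.cast_pos.2 hm)).2 (Nat.cast_le.2 hmk)
  rw [mul_div_assoc]
  exact mul_pos (by linarith) (log_log_three_mul_pos hx)

theorem stmt_4_general {m k : ℕ} (hm : 0 < m) (hmk : m ≤ k) :
    delta m k ≤ (6 / ((k / m : ℝ) * Real.log (Real.log (3 * k / m)))) ^ (m - 1) := by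
  have hm' : (0 : ℝ) < m := Nat.cast_pos.2 hm
  have hx : (1 : ℝ) ≤ k / m := (one_le_div hm').2 (Nat.cast_le.2 hmk)
  obtain ⟨q, hq, hφ, hle⟩ := exists_totient_le_and_mul_log_log_le hx
  have totient_lt : q.totient * (m - 1) < k :=
    calc q.totient * (m - 1) < q.totient * m := by
          gcongr
          exact Nat.sub_one_lt hm.ne'
      _ ≤ k := by exact_mod_cast (le_div_iff₀ hm').1 hφ
  refine (delta_le_of_totient_lt hm hq totient_lt).trans ?_
  rw [← mul_div_assoc] at hle
  gcongr ?_ ^ _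
  rwa [div_le_div_iff₀ (Nat.cast_pos.2 hq) (div_mul_log_log_pos hm hmk), one_mul]

theorem stmt_4 : ∃ C : ℝ, 0 < C ∧ ∀ m k : ℕ, 2 ≤ m → m ≤ k →
    delta m k ≤ (Real.log (2 * m)) ^ (C * m) /
        ((k / m : ℝ) * Real.log (Real.log (3 * k / m))) ^ (m - 1) := by
  refine ⟨10, by norm_num, fun m k hm hmk => (stmt_4_general (by lia) hmk).trans ?_⟩
  rw [div_pow]
  exact div_le_div_of_nonneg_right (six_pow_le_log_rpow hm)
    (pow_pos (div_mul_log_log_pos (by lia) hmk) _).le
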